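/- (Proposition 2.1(1), Đurđević) Assume the antipode S of H is bijective. Then the Đurđević braiding σ : Q → Q is bijective, and its inverse is given by σ⁻¹(π(a ⊗ a′)) = τ(S⁻¹(a′₍₁₎)) · (a a′₍₀₎) for all a, a′ ∈ A, where · denotes the right A-action on Q. (In particular the assignment a ⊗ a′ ↦ τ(S⁻¹(a′₍₁₎)) · (a a′₍₀₎) is well defined on Q and is a two-sided inverse of σ.) -/

import Mathlib

/-!
The braiding becomes transparent after conjugation by `can`. In the algebra `A ⊗ H` one has
`c̃(a ⊗ a') = (a ⊗ 1) δ(a')` and `β(a ⊗ a') = δ(a) (a' ⊗ 1)`. Consider the endomorphisms of `A ⊗ H`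

* `Φ(a ⊗ h) = δ(a) (1 ⊗ S h) = a₍₀₎ ⊗ a₍₁₎ S(h)`,
* `Ψ(a ⊗ h) = (1 ⊗ S⁻¹ h) δ(a) = a₍₀₎ ⊗ S⁻¹(h) a₍₁₎`.

By coassociativity, counitality and the antipode axioms, `Φ(δ a) = a ⊗ 1 = Ψ(δ a)`. Since `Φ` and
`Ψ` are compatible with multiplication in the appropriate variables (`S` and `S⁻¹` reverse
products), it follows that `Φ ∘ c̃ = β` and that `Φ`, `Ψ` are mutually inverse. Hence
`σ = can⁻¹ ∘ Φ ∘ can` is bijective with inverse `can⁻¹ ∘ Ψ ∘ can`. Finally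
`can (q · c) = can(q) δ(c)`, so `can (τ(S⁻¹ h) · c) = (1 ⊗ S⁻¹ h) δ(c) = Ψ(c ⊗ h)`; applied to
`c ⊗ h = a a'₍₀₎ ⊗ a'₍₁₎` this is the stated formula for the inverse.
-/

open TensorProduct

noncomputable section

variable {k H A : Type*} [Field k] [Ring H] [HopfAlgebra k H] [Ring A] [Algebra k A]

/-- The lifted canonical map `c̃ : A ⊗ A → A ⊗ H`, `c̃(a ⊗ a') = a a'₍₀₎ ⊗ a'₍₁₎`,
for a coaction `δ : A → A ⊗ H`. -/
def ctilde (δ : A →ₐ[k] A ⊗[k] H) : A ⊗[k] A →ₗ[k] A ⊗[k] H :=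
  (TensorProduct.map (LinearMap.mul' k A) LinearMap.id)
    ∘ₗ (TensorProduct.assoc k A A H).symm.toLinearMap
    ∘ₗ (TensorProduct.map LinearMap.id δ.toLinearMap)

/-- The map `β : A ⊗ A → A ⊗ H`, `β(a ⊗ a') = a₍₀₎a' ⊗ a₍₁₎`. -/
def betaMap (δ : A →ₐ[k] A ⊗[k] H) : A ⊗[k] A →ₗ[k] A ⊗[k] H :=
  (TensorProduct.map (LinearMap.mul' k A) LinearMap.id)
    ∘ₗ (TensorProduct.assoc k A A H).symm.toLinearMap
    ∘ₗ (TensorProduct.map LinearMap.id (TensorProduct.comm k H A).toLinearMap)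
    ∘ₗ (TensorProduct.assoc k A H A).toLinearMap
    ∘ₗ (TensorProduct.map δ.toLinearMap LinearMap.id)

/-- The diagonal coaction `δ₂ : A ⊗ A → (A ⊗ A) ⊗ H`,
`δ₂(a ⊗ a') = (a₍₀₎ ⊗ a'₍₀₎) ⊗ a₍₁₎a'₍₁₎`. -/
def delta2 (δ : A →ₐ[k] A ⊗[k] H) : A ⊗[k] A →ₗ[k] (A ⊗[k] A) ⊗[k] H :=
  (TensorProduct.map LinearMap.id (LinearMap.mul' k H))
    ∘ₗ (TensorProduct.tensorTensorTensorComm k A H A H).toLinearMap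
    ∘ₗ (TensorProduct.map δ.toLinearMap δ.toLinearMap)

/-- `J ⊆ A ⊗ A`: the k-span of the balanced relations `ab ⊗ a' − a ⊗ ba'`
with `b` a coinvariant element (`δ b = b ⊗ 1`). -/
def Jrel (δ : A →ₐ[k] A ⊗[k] H) : Submodule k (A ⊗[k] A) :=
  Submodule.span k {x | ∃ a a' b : A, δ b = b ⊗ₜ[k] (1 : H) ∧
    x = (a * b) ⊗ₜ[k] a' - a ⊗ₜ[k] (b * a')}

/-- `A ⊗ I`: the k-span of `{a ⊗ x : a ∈ A, x ∈ I}` inside `A ⊗ H`. -/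
def AtI (A : Type*) [Ring A] [Algebra k A] (I : Submodule k H) :
    Submodule k (A ⊗[k] H) :=
  Submodule.span k {z | ∃ a : A, ∃ h ∈ I, z = a ⊗ₜ[k] h}

/-- Counitality of the coaction `δ` : `(id ⊗ ε) ∘ δ = id` under `A ⊗ k ≅ A`. -/
def Counital (δ : A →ₐ[k] A ⊗[k] H) : Prop :=
  ∀ a : A, (TensorProduct.rid k A)
    (TensorProduct.map LinearMap.id (Coalgebra.counit (R := k) (A := H)) (δ a)) = a

/-- Coassociativity of the coaction `δ` : `(δ ⊗ id) ∘ δ = (id ⊗ Δ) ∘ δ`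
up to the tensor associator. -/
def Coassoc (δ : A →ₐ[k] A ⊗[k] H) : Prop :=
  ∀ a : A, (TensorProduct.assoc k A H H)
      (TensorProduct.map δ.toLinearMap LinearMap.id (δ a))
    = TensorProduct.map LinearMap.id (Coalgebra.comul (R := k) (A := H)) (δ a)

/-- The `σ`-closure `⟨W⟩_σ = Σ_{n ≥ 0} σⁿ(W)` of a subspace `W`. -/
def sclosure {M : Type*} [AddCommGroup M] [Module k M]
    (σ : M →ₗ[k] M) (W : Submodule k M) : Submodule k M :=
  ⨆ n : ℕ, Submodule.map (σ ^ n) W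

theorem ctilde_tmul (δ : A →ₐ[k] A ⊗[k] H) (a a' : A) :
    ctilde δ (a ⊗ₜ[k] a') = (a ⊗ₜ[k] (1 : H)) * δ a' := by
  simp only [ctilde, LinearMap.comp_apply, TensorProduct.map_tmul, LinearMap.id_apply,
    AlgHom.toLinearMap_apply, LinearEquiv.coe_coe]
  induction δ a' using TensorProduct.induction_on with
  | zero => simp
  | tmul x h => simp
  | add x y hx hy => simp only [TensorProduct.tmul_add, map_add, mul_add, hx, hy]

theorem betaMap_tmul (δ : A →ₐ[k] A ⊗[k] H) (a a' : A) :
    betaMap δ (a ⊗ₜ[k] a') = δ a * (a' ⊗ₜ[k] (1 : H)) := by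
  simp only [betaMap, LinearMap.comp_apply, TensorProduct.map_tmul, LinearMap.id_apply,
    AlgHom.toLinearMap_apply, LinearEquiv.coe_coe]
  induction δ a using TensorProduct.induction_on with
  | zero => simp
  | tmul x h => simp
  | add x y hx hy => simp only [TensorProduct.add_tmul, map_add, add_mul, hx, hy]

/-- The twist `Φ(a ⊗ h) = δ(a) (1 ⊗ S h) = a₍₀₎ ⊗ a₍₁₎ S(h)`, which is `σ` conjugated by `can`. -/
def Phi (δ : A →ₐ[k] A ⊗[k] H) : A ⊗[k] H →ₗ[k] A ⊗[k] H :=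
  LinearMap.mul' k (A ⊗[k] H) ∘ₗ TensorProduct.map δ.toLinearMap
    (TensorProduct.mk k A H 1 ∘ₗ HopfAlgebra.antipode k)

/-- The twist `Ψ(a ⊗ h) = (1 ⊗ f h) δ(a) = a₍₀₎ ⊗ f(h) a₍₁₎`, for a linear map `f` in the role
of `S⁻¹`. -/
def Psi (δ : A →ₐ[k] A ⊗[k] H) (f : H →ₗ[k] H) : A ⊗[k] H →ₗ[k] A ⊗[k] H :=
  LinearMap.mul' k (A ⊗[k] H) ∘ₗ TensorProduct.map (TensorProduct.mk k A H 1 ∘ₗ f)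
    δ.toLinearMap ∘ₗ (TensorProduct.comm k A H).toLinearMap

theorem Phi_tmul (δ : A →ₐ[k] A ⊗[k] H) (a : A) (h : H) :
    Phi δ (a ⊗ₜ[k] h) = δ a * ((1 : A) ⊗ₜ[k] HopfAlgebra.antipode k h) := by
  simp [Phi]

theorem Psi_tmul (δ : A →ₐ[k] A ⊗[k] H) (f : H →ₗ[k] H) (a : A) (h : H) :
    Psi δ f (a ⊗ₜ[k] h) = ((1 : A) ⊗ₜ[k] f h) * δ a := by
  simp [Psi]

/-- Any linear `g : H ⊗ H → H` with `g ∘ Δ = η ∘ ε` contracts the iterated coaction to `a ⊗ 1`. -/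
theorem contract_coaction (δ : A →ₐ[k] A ⊗[k] H) (hcu : Counital δ) (hca : Coassoc δ)
    (g : H ⊗[k] H →ₗ[k] H)
    (hg : ∀ h : H, g (Coalgebra.comul (R := k) h) = algebraMap k H (Coalgebra.counit h)) (a : A) :
    TensorProduct.map LinearMap.id g ((TensorProduct.assoc k A H H)
      (TensorProduct.map δ.toLinearMap LinearMap.id (δ a))) = a ⊗ₜ[k] (1 : H) := by
  rw [hca a]
  conv_rhs => rw [← hcu a]
  induction δ a using TensorProduct.induction_on with
  | zero => simp
  | tmul x h =>
    simp [hg, Algebra.algebraMap_eq_smul_one, TensorProduct.smul_tmul']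
  | add x y hx hy => simp only [TensorProduct.add_tmul, map_add, hx, hy]

theorem Phi_coaction (δ : A →ₐ[k] A ⊗[k] H) (hcu : Counital δ) (hca : Coassoc δ) (a : A) :
    Phi δ (δ a) = a ⊗ₜ[k] (1 : H) := by
  rw [← contract_coaction δ hcu hca
    (LinearMap.mul' k H ∘ₗ (HopfAlgebra.antipode k).lTensor H) (by simp) a]
  induction δ a using TensorProduct.induction_on with
  | zero => simp
  | add x y hx hy => simp only [map_add, hx, hy]
  | tmul x h =>
    rw [Phi_tmul]
    simp only [TensorProduct.map_tmul, AlgHom.toLinearMap_apply, LinearMap.id_apply]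
    induction δ x using TensorProduct.induction_on with
    | zero => simp
    | tmul y l => simp
    | add u v hu hv => simp only [TensorProduct.add_tmul, map_add, add_mul, hu, hv]

/-- The inverse of the antipode reverses products. -/
theorem Sinv_mul (f : H →ₗ[k] H)
    (h1 : ∀ h : H, HopfAlgebra.antipode k (f h) = h)
    (h2 : ∀ h : H, f (HopfAlgebra.antipode k h) = h) (x y : H) :
    f (x * y) = f y * f x := by
  conv_lhs => rw [← h1 x, ← h1 y, ← HopfAlgebra.antipode_mul_antidistrib, h2]

/-- The identity `S⁻¹(h₍₂₎) h₍₁₎ = ε(h) 1`, obtained by applying `S` to both sides. -/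
theorem Sinv_comul (f : H →ₗ[k] H)
    (h1 : ∀ h : H, HopfAlgebra.antipode k (f h) = h)
    (h2 : ∀ h : H, f (HopfAlgebra.antipode k h) = h) (h : H) :
    (LinearMap.mul' k H ∘ₗ (TensorProduct.comm k H H).toLinearMap ∘ₗ f.lTensor H)
      (Coalgebra.comul (R := k) h) = algebraMap k H (Coalgebra.counit h) := by
  apply Function.LeftInverse.injective h2
  have hS : HopfAlgebra.antipode k (algebraMap k H (Coalgebra.counit h))
      = algebraMap k H (Coalgebra.counit h) := by
    simp [Algebra.algebraMap_eq_smul_one]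
  rw [hS, ← HopfAlgebra.mul_antipode_rTensor_comul_apply]
  induction Coalgebra.comul (R := k) h using TensorProduct.induction_on with
  | zero => simp
  | tmul x y => simp [HopfAlgebra.antipode_mul_antidistrib, h1]
  | add x y hx hy => simp only [map_add, hx, hy]

theorem Psi_coaction (δ : A →ₐ[k] A ⊗[k] H) (hcu : Counital δ) (hca : Coassoc δ)
    (f : H →ₗ[k] H) (h1 : ∀ h : H, HopfAlgebra.antipode k (f h) = h)
    (h2 : ∀ h : H, f (HopfAlgebra.antipode k h) = h) (a : A) :
    Psi δ f (δ a) = a ⊗ₜ[k] (1 : H) := by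
  rw [← contract_coaction δ hcu hca _ (Sinv_comul f h1 h2) a]
  induction δ a using TensorProduct.induction_on with
  | zero => simp
  | add x y hx hy => simp only [map_add, hx, hy]
  | tmul x h =>
    rw [Psi_tmul]
    simp only [TensorProduct.map_tmul, AlgHom.toLinearMap_apply, LinearMap.id_apply]
    induction δ x using TensorProduct.induction_on with
    | zero => simp
    | tmul y l => simp
    | add u v hu hv => simp only [TensorProduct.add_tmul, map_add, mul_add, hu, hv]

theorem Phi_mul_left (δ : A →ₐ[k] A ⊗[k] H) (a : A) (z : A ⊗[k] H) :
    Phi δ ((a ⊗ₜ[k] (1 : H)) * z) = δ a * Phi δ z := by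
  induction z using TensorProduct.induction_on with
  | zero => simp
  | tmul x h => simp [Phi_tmul, mul_assoc]
  | add x y hx hy => simp only [map_add, mul_add, hx, hy]

theorem Phi_one_tmul_mul (δ : A →ₐ[k] A ⊗[k] H) (h : H) (z : A ⊗[k] H) :
    Phi δ (((1 : A) ⊗ₜ[k] h) * z) = Phi δ z * ((1 : A) ⊗ₜ[k] HopfAlgebra.antipode k h) := by
  induction z using TensorProduct.induction_on with
  | zero => simp
  | tmul x l => simp [Phi_tmul, mul_assoc, HopfAlgebra.antipode_mul_antidistrib]
  | add x y hx hy => simp only [map_add, mul_add, add_mul, hx, hy]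

theorem Psi_mul_one_tmul (δ : A →ₐ[k] A ⊗[k] H) (f : H →ₗ[k] H)
    (hf : ∀ x y : H, f (x * y) = f y * f x) (h : H) (z : A ⊗[k] H) :
    Psi δ f (z * ((1 : A) ⊗ₜ[k] h)) = ((1 : A) ⊗ₜ[k] f h) * Psi δ f z := by
  induction z using TensorProduct.induction_on with
  | zero => simp
  | tmul x l => simp [Psi_tmul, ← mul_assoc, hf]
  | add x y hx hy => simp only [map_add, mul_add, add_mul, hx, hy]

theorem Phi_ctilde (δ : A →ₐ[k] A ⊗[k] H) (hcu : Counital δ) (hca : Coassoc δ)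
    (x : A ⊗[k] A) : Phi δ (ctilde δ x) = betaMap δ x := by
  induction x using TensorProduct.induction_on with
  | zero => simp
  | tmul a a' => rw [ctilde_tmul, betaMap_tmul, Phi_mul_left, Phi_coaction δ hcu hca]
  | add x y hx hy => simp only [map_add, hx, hy]

theorem Phi_Psi (δ : A →ₐ[k] A ⊗[k] H) (hcu : Counital δ) (hca : Coassoc δ)
    (f : H →ₗ[k] H) (h1 : ∀ h : H, HopfAlgebra.antipode k (f h) = h) (z : A ⊗[k] H) :
    Phi δ (Psi δ f z) = z := by
  induction z using TensorProduct.induction_on with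
  | zero => simp
  | tmul a h => simp [Psi_tmul, Phi_one_tmul_mul, Phi_coaction δ hcu hca, h1]
  | add x y hx hy => simp only [map_add, hx, hy]

theorem Psi_Phi (δ : A →ₐ[k] A ⊗[k] H) (hcu : Counital δ) (hca : Coassoc δ)
    (f : H →ₗ[k] H) (h1 : ∀ h : H, HopfAlgebra.antipode k (f h) = h)
    (h2 : ∀ h : H, f (HopfAlgebra.antipode k h) = h) (z : A ⊗[k] H) :
    Psi δ f (Phi δ z) = z := by
  induction z using TensorProduct.induction_on with
  | zero => simp
  | tmul a h =>
    simp [Phi_tmul, Psi_mul_one_tmul δ f (Sinv_mul f h1 h2), Psi_coaction δ hcu hca f h1 h2, h2]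
  | add x y hx hy => simp only [map_add, hx, hy]

/-- Proposition 2.1(1), Đurđević: if the antipode is bijective, the
Đurđević braiding `σ` is bijective, with inverse
`σ⁻¹(a ⊗_B a') = τ(S⁻¹(a'₍₁₎)) · (a a'₍₀₎)`. -/
theorem stmt6 (δ : A →ₐ[k] A ⊗[k] H) (hcu : Counital δ) (hca : Coassoc δ)
    (can : ((A ⊗[k] A) ⧸ Jrel δ) →ₗ[k] A ⊗[k] H)
    (hcan : ∀ x : A ⊗[k] A, can ((Jrel δ).mkQ x) = ctilde δ x)
    (hbij : Function.Bijective can)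
    (βbar : ((A ⊗[k] A) ⧸ Jrel δ) →ₗ[k] A ⊗[k] H)
    (hβ : ∀ x : A ⊗[k] A, βbar ((Jrel δ).mkQ x) = betaMap δ x)
    (σ : ((A ⊗[k] A) ⧸ Jrel δ) →ₗ[k] (A ⊗[k] A) ⧸ Jrel δ)
    (hσ : ∀ y : (A ⊗[k] A) ⧸ Jrel δ, can (σ y) = βbar y)
    (τ : H →ₗ[k] (A ⊗[k] A) ⧸ Jrel δ)
    (hτ : ∀ h : H, can (τ h) = (1 : A) ⊗ₜ[k] h)
    (ract : A →ₗ[k] ((A ⊗[k] A) ⧸ Jrel δ) →ₗ[k] (A ⊗[k] A) ⧸ Jrel δ)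
    (hract : ∀ c x y : A,
      ract c ((Jrel δ).mkQ (x ⊗ₜ[k] y)) = (Jrel δ).mkQ (x ⊗ₜ[k] (y * c)))
    (Sinv : H →ₗ[k] H)
    (hS1 : ∀ h : H, HopfAlgebra.antipode (R := k) (Sinv h) = h)
    (hS2 : ∀ h : H, Sinv (HopfAlgebra.antipode (R := k) h) = h) :
    Function.Bijective σ ∧
    ∃ σinv : ((A ⊗[k] A) ⧸ Jrel δ) →ₗ[k] (A ⊗[k] A) ⧸ Jrel δ,
      (∀ a a' : A,
        σinv ((Jrel δ).mkQ (a ⊗ₜ[k] a')) =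
          (TensorProduct.lift ract ∘ₗ
            TensorProduct.map (LinearMap.mulLeft k a) (τ ∘ₗ Sinv)) (δ a')) ∧
      σ ∘ₗ σinv = LinearMap.id ∧ σinv ∘ₗ σ = LinearMap.id := by
  have hσΦ : ∀ q, can (σ q) = Phi δ (can q) := by
    intro q
    obtain ⟨x, rfl⟩ := (Jrel δ).mkQ_surjective q
    rw [hσ, hβ, hcan, Phi_ctilde δ hcu hca]
  have hact : ∀ c q, can (ract c q) = can q * δ c := by
    intro c q
    obtain ⟨x, rfl⟩ := (Jrel δ).mkQ_surjective q
    induction x using TensorProduct.induction_on with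
    | zero => simp
    | tmul x y => rw [hract, hcan, hcan, ctilde_tmul, ctilde_tmul, map_mul, mul_assoc]
    | add x y hx hy => simp only [map_add, add_mul, hx, hy]
  let e := LinearEquiv.ofBijective can hbij
  have he : ∀ z, can (e.symm z) = z := fun z => e.apply_symm_apply z
  let σinv := e.symm.toLinearMap ∘ₗ Psi δ Sinv ∘ₗ can
  have hσinv : ∀ q, can (σinv q) = Psi δ Sinv (can q) := fun q => he _
  have hr : σ ∘ₗ σinv = LinearMap.id := LinearMap.ext fun q => hbij.1 (by
    rw [LinearMap.comp_apply, hσΦ, hσinv, Phi_Psi δ hcu hca Sinv hS1, LinearMap.id_apply])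
  have hl : σinv ∘ₗ σ = LinearMap.id := LinearMap.ext fun q => hbij.1 (by
    rw [LinearMap.comp_apply, hσinv, hσΦ, Psi_Phi δ hcu hca Sinv hS1 hS2, LinearMap.id_apply])
  refine ⟨Function.bijective_iff_has_inverse.mpr
    ⟨σinv, fun q => LinearMap.congr_fun hl q, fun q => LinearMap.congr_fun hr q⟩,
    σinv, fun a a' => hbij.1 ?_, hr, hl⟩
  rw [hσinv, hcan, ctilde_tmul]
  induction δ a' using TensorProduct.induction_on with
  | zero => simp
  | tmul c h =>
    simp only [Algebra.TensorProduct.tmul_mul_tmul, one_mul, LinearMap.comp_apply,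
      TensorProduct.map_tmul, TensorProduct.lift.tmul, LinearMap.mulLeft_apply]
    rw [hact, hτ, Psi_tmul]
  | add x y hx hy => simp only [map_add, mul_add, hx, hy]

end
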